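/- Let Ω ⊆ ℂ be open, let γ : ℂ → ℝ be continuously differentiable on Ω with γ(z) > 0 for all z ∈ Ω, and set q = −γ^{−1/2}·∂(γ^{1/2}) on Ω. Suppose v, w : ℂ → ℂ are continuously differentiable on Ω with ∂̄v = q·w and ∂w = conj(q)·v on Ω, and suppose u : ℂ → ℂ is twice continuously differentiable on Ω with ∂u = γ^{−1/2}·v and ∂̄u = γ^{−1/2}·w on Ω. Then u solves the conductivity equation ∂ₓ(γ ∂ₓu) + ∂_y(γ ∂_yu) = 0 on Ω. -/

import Mathlib

open MeasureTheory Complex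

/-- Wirtinger derivative `∂f = (∂ₓf − i∂_yf)/2` of `f : ℂ → ℂ`. -/
noncomputable def wD (f : ℂ → ℂ) (z : ℂ) : ℂ :=
  (fderiv ℝ f z 1 - Complex.I * fderiv ℝ f z Complex.I) / 2

/-- Wirtinger derivative `∂̄f = (∂ₓf + i∂_yf)/2` of `f : ℂ → ℂ`. -/
noncomputable def wDbar (f : ℂ → ℂ) (z : ℂ) : ℂ :=
  (fderiv ℝ f z 1 + Complex.I * fderiv ℝ f z Complex.I) / 2

/-!
In Wirtinger form the conductivity operator is `∇·(κ∇u) = 2 (∂̄(κ ∂u) + ∂(κ ∂̄u))`. With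
`κ = σ²`, `∂u = σ⁻¹ v` and `∂̄u = σ⁻¹ w` this is `2 (∂̄(σ v) + ∂(σ w))`, and the product rule
turns the system `σ ∂̄v = -(∂σ) w`, `σ ∂w = -(∂̄σ) v` into the vanishing of this sum: the term of
`∂̄(σ v)` that differentiates `v` cancels the term of `∂(σ w)` that differentiates `σ`, and vice
versa. For `σ = γ^{1/2}` real, `∂̄σ` is the conjugate of `∂σ`, which is where `conj q` comes from.
-/

open scoped Topology ComplexConjugate

section Wirtinger

variable {f g : ℂ → ℂ} {z : ℂ}

theorem fderiv_one_eq_wD_add_wDbar (f : ℂ → ℂ) (z : ℂ) :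
    fderiv ℝ f z 1 = wD f z + wDbar f z := by
  unfold wD wDbar
  ring

theorem fderiv_I_eq_I_mul_wD_sub_wDbar (f : ℂ → ℂ) (z : ℂ) :
    fderiv ℝ f z I = I * (wD f z - wDbar f z) := by
  unfold wD wDbar
  linear_combination fderiv ℝ f z I * I_mul_I

theorem wD_congr (h : f =ᶠ[𝓝 z] g) : wD f z = wD g z := by
  simp only [wD, h.fderiv_eq]

theorem wDbar_congr (h : f =ᶠ[𝓝 z] g) : wDbar f z = wDbar g z := by
  simp only [wDbar, h.fderiv_eq]

theorem wD_mul (hf : DifferentiableAt ℝ f z) (hg : DifferentiableAt ℝ g z) :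
    wD (fun ζ => f ζ * g ζ) z = f z * wD g z + wD f z * g z := by
  simp only [wD, fderiv_fun_mul hf hg, add_apply, smul_apply, smul_eq_mul]
  ring

theorem wDbar_mul (hf : DifferentiableAt ℝ f z) (hg : DifferentiableAt ℝ g z) :
    wDbar (fun ζ => f ζ * g ζ) z = f z * wDbar g z + wDbar f z * g z := by
  simp only [wDbar, fderiv_fun_mul hf hg, add_apply, smul_apply, smul_eq_mul]
  ring

theorem wDbar_conj (f : ℂ → ℂ) (z : ℂ) :
    wDbar (fun ζ => conj (f ζ)) z = conj (wD f z) := by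
  have fderiv_conj : fderiv ℝ (fun ζ => conj (f ζ)) z =
      (conjCLE : ℂ →L[ℝ] ℂ).comp (fderiv ℝ f z) := conjCLE.comp_fderiv
  simp [wD, wDbar, fderiv_conj, map_ofNat]

theorem conj_wD_ofReal (s : ℂ → ℝ) (z : ℂ) :
    conj (wD (fun ζ => (s ζ : ℂ)) z) = wDbar (fun ζ => (s ζ : ℂ)) z := by
  simp only [← wDbar_conj, conj_ofReal]

theorem conj_neg_inv_mul_wD_ofReal (s : ℂ → ℝ) (z : ℂ) :
    conj (-(s z : ℂ)⁻¹ * wD (fun ζ => (s ζ : ℂ)) z) =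
      -(s z : ℂ)⁻¹ * wDbar (fun ζ => (s ζ : ℂ)) z := by
  simp only [map_mul, map_neg, map_inv₀, conj_ofReal, conj_wD_ofReal]

end Wirtinger

section SquareRoot

theorem ofReal_sqrt_ne_zero {x : ℝ} (hx : 0 < x) : (√x : ℂ) ≠ 0 :=
  ofReal_ne_zero.mpr (Real.sqrt_pos.mpr hx).ne'

theorem ofReal_eq_ofReal_sqrt_sq {x : ℝ} (hx : 0 ≤ x) : (x : ℂ) = (√x : ℂ) ^ 2 := by
  rw [← ofReal_pow, Real.sq_sqrt hx]

theorem differentiableOn_ofReal_sqrt {E : Type*} [NormedAddCommGroup E] [NormedSpace ℝ E]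
    {s : Set E} {f : E → ℝ} (hf : DifferentiableOn ℝ f s) (hf₀ : ∀ x ∈ s, f x ≠ 0) :
    DifferentiableOn ℝ (fun x => (√(f x) : ℂ)) s :=
  ofRealCLM.differentiable.comp_differentiableOn (hf.sqrt hf₀)

end SquareRoot

section Conductivity

variable {Ω : Set ℂ} {κ σ u v w : ℂ → ℂ} {z : ℂ}

/-- The conductivity operator `∇·(κ∇u) = ∂ₓ(κ ∂ₓu) + ∂_y(κ ∂_yu)`, with a complex-valued
coefficient `κ`. -/
noncomputable def conductivityOperator (κ u : ℂ → ℂ) (z : ℂ) : ℂ :=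
  fderiv ℝ (fun ζ => κ ζ * fderiv ℝ u ζ 1) z 1 + fderiv ℝ (fun ζ => κ ζ * fderiv ℝ u ζ I) z I

theorem fderiv_add_one_add_fderiv_I_mul_sub_I {f g : ℂ → ℂ} (hf : DifferentiableAt ℝ f z)
    (hg : DifferentiableAt ℝ g z) :
    fderiv ℝ (fun ζ => f ζ + g ζ) z 1 + fderiv ℝ (fun ζ => I * (f ζ - g ζ)) z I =
      2 * (wDbar f z + wD g z) := by
  rw [fderiv_fun_add hf hg, fderiv_const_mul (hf.fun_sub hg), fderiv_fun_sub hf hg]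
  simp only [wD, wDbar, add_apply, sub_apply, smul_apply, smul_eq_mul]
  ring

theorem conductivityOperator_eq_two_mul_wDbar_add_wD
    (hf : DifferentiableAt ℝ (fun ζ => κ ζ * wD u ζ) z)
    (hg : DifferentiableAt ℝ (fun ζ => κ ζ * wDbar u ζ) z) :
    conductivityOperator κ u z =
      2 * (wDbar (fun ζ => κ ζ * wD u ζ) z + wD (fun ζ => κ ζ * wDbar u ζ) z) := by
  rw [← fderiv_add_one_add_fderiv_I_mul_sub_I hf hg]
  simp only [conductivityOperator, fderiv_one_eq_wD_add_wDbar u, fderiv_I_eq_I_mul_wD_sub_wDbar u,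
    mul_add, mul_sub, mul_left_comm]

theorem wDbar_mul_add_wD_mul_eq_zero (hσ : DifferentiableAt ℝ σ z)
    (hv : DifferentiableAt ℝ v z) (hw : DifferentiableAt ℝ w z)
    (h_dbar : σ z * wDbar v z = -wD σ z * w z) (h_d : σ z * wD w z = -wDbar σ z * v z) :
    wDbar (fun ζ => σ ζ * v ζ) z + wD (fun ζ => σ ζ * w ζ) z = 0 := by
  rw [wDbar_mul hσ hv, wD_mul hσ hw]
  linear_combination h_dbar + h_d

theorem first_order_system_to_conductivity_general (hΩ : IsOpen Ω)
    (hσ : DifferentiableOn ℝ σ Ω) (hσ₀ : ∀ z ∈ Ω, σ z ≠ 0) (hκ : ∀ z ∈ Ω, κ z = σ z ^ 2)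
    {q r : ℂ → ℂ} (hq : ∀ z ∈ Ω, q z = -(σ z)⁻¹ * wD σ z)
    (hr : ∀ z ∈ Ω, r z = -(σ z)⁻¹ * wDbar σ z)
    (hv : DifferentiableOn ℝ v Ω) (hw : DifferentiableOn ℝ w Ω)
    (hv_dbar : ∀ z ∈ Ω, wDbar v z = q z * w z) (hw_d : ∀ z ∈ Ω, wD w z = r z * v z)
    (_hu : DifferentiableOn ℝ u Ω) (hu_d : ∀ z ∈ Ω, wD u z = (σ z)⁻¹ * v z)
    (hu_dbar : ∀ z ∈ Ω, wDbar u z = (σ z)⁻¹ * w z) :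
    ∀ z ∈ Ω, conductivityOperator κ u z = 0 := by
  intro z hz
  have hΩz : Ω ∈ 𝓝 z := hΩ.mem_nhds hz
  have hσz := hσ.differentiableAt hΩz
  have hvz := hv.differentiableAt hΩz
  have hwz := hw.differentiableAt hΩz
  have flux_d : (fun ζ => κ ζ * wD u ζ) =ᶠ[𝓝 z] fun ζ => σ ζ * v ζ := by
    filter_upwards [hΩz] with ζ hζ
    rw [hκ ζ hζ, hu_d ζ hζ, sq, mul_assoc, mul_inv_cancel_left₀ (hσ₀ ζ hζ)]
  have flux_dbar : (fun ζ => κ ζ * wDbar u ζ) =ᶠ[𝓝 z] fun ζ => σ ζ * w ζ := by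
    filter_upwards [hΩz] with ζ hζ
    rw [hκ ζ hζ, hu_dbar ζ hζ, sq, mul_assoc, mul_inv_cancel_left₀ (hσ₀ ζ hζ)]
  rw [conductivityOperator_eq_two_mul_wDbar_add_wD
      ((hσz.fun_mul hvz).congr_of_eventuallyEq flux_d)
      ((hσz.fun_mul hwz).congr_of_eventuallyEq flux_dbar),
    wDbar_congr flux_d, wD_congr flux_dbar,
    wDbar_mul_add_wD_mul_eq_zero hσz hvz hwz ?_ ?_, mul_zero]
  · rw [hv_dbar z hz, hq z hz]
    field_simp [hσ₀ z hz]
  · rw [hw_d z hz, hr z hz]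
    field_simp [hσ₀ z hz]

end Conductivity

/-- If `(v,w)` solves the first order system `∂̄v = q·w`, `∂w = conj(q)·v` with
`q = −γ^{−1/2}∂(γ^{1/2})`, and `u` satisfies `∂u = γ^{−1/2}v`, `∂̄u = γ^{−1/2}w`,
then `u` solves the conductivity equation `∇·γ∇u = 0`. -/
theorem first_order_system_to_conductivity
    (Ω : Set ℂ) (hΩ : IsOpen Ω) (γ : ℂ → ℝ)
    (hγ : ContDiffOn ℝ 1 γ Ω) (hγpos : ∀ z ∈ Ω, 0 < γ z)
    (q : ℂ → ℂ)
    (hq : ∀ z ∈ Ω, q z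
      = -((Real.sqrt (γ z) : ℂ))⁻¹ * wD (fun ζ => (Real.sqrt (γ ζ) : ℂ)) z)
    (v w : ℂ → ℂ) (hv : ContDiffOn ℝ 1 v Ω) (hw : ContDiffOn ℝ 1 w Ω)
    (h1 : ∀ z ∈ Ω, wDbar v z = q z * w z)
    (h2 : ∀ z ∈ Ω, wD w z = (starRingEnd ℂ) (q z) * v z)
    (u : ℂ → ℂ) (hu : ContDiffOn ℝ 2 u Ω)
    (hu1 : ∀ z ∈ Ω, wD u z = ((Real.sqrt (γ z) : ℂ))⁻¹ * v z)
    (hu2 : ∀ z ∈ Ω, wDbar u z = ((Real.sqrt (γ z) : ℂ))⁻¹ * w z) :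
    ∀ z ∈ Ω,
      fderiv ℝ (fun ζ => (γ ζ : ℂ) * fderiv ℝ u ζ 1) z 1
        + fderiv ℝ (fun ζ => (γ ζ : ℂ) * fderiv ℝ u ζ Complex.I) z Complex.I = 0 := by
  exact first_order_system_to_conductivity_general hΩ
    (differentiableOn_ofReal_sqrt (hγ.differentiableOn one_ne_zero) fun z hz => (hγpos z hz).ne')
    (fun z hz => ofReal_sqrt_ne_zero (hγpos z hz))
    (fun z hz => ofReal_eq_ofReal_sqrt_sq (hγpos z hz).le)
    hq (fun z hz => by rw [hq z hz, conj_neg_inv_mul_wD_ofReal fun ζ => √(γ ζ)])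
    (hv.differentiableOn one_ne_zero) (hw.differentiableOn one_ne_zero) h1 h2
    (hu.differentiableOn two_ne_zero) hu1 hu2
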